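/- arXiv:1609.07121 — 7 statements merged into one kernel-verified Lean document; each statement's English description precedes it below -/
import Mathlib

section
/- Fix b > 0 and an integer j ≥ 1. Then there exist constants K > 0 and c₋, c₊ > 0 such that for every k ≥ K one has c₋ k^{2j−3} e^{−k²/b} ≤ ∫_{−∞}^0 ψ_{j,∞}(x;k)² dx ≤ c₊ k^{2j−3} e^{−k²/b}. -/
open MeasureTheory Real Set

/-- Physicists' Hermite polynomial via the Rodrigues formula
`H_q(x) = (-1)^q e^{x²} (d^q/dx^q) e^{-x²}`. -/
noncomputable def hermiteP (q : ℕ) (x : ℝ) : ℝ :=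
  (-1 : ℝ) ^ q * Real.exp (x ^ 2) * iteratedDeriv q (fun t => Real.exp (-t ^ 2)) x

/-- The normalized Hermite function
`φ_j(x) = (√π (j-1)! 2^(j-1))^{-1/2} H_{j-1}(x) e^{-x²/2}` for `j ≥ 1`. -/
noncomputable def phiF (j : ℕ) (x : ℝ) : ℝ :=
  (Real.sqrt (Real.sqrt Real.pi * (Nat.factorial (j - 1)) * 2 ^ (j - 1)))⁻¹ *
    hermiteP (j - 1) x * Real.exp (-x ^ 2 / 2)

/-- `ψ_{j,∞}(x;k) = b^{1/4} φ_j(b^{1/2} x - b^{-1/2} k)`. -/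
noncomputable def psiInf (b : ℝ) (j : ℕ) (x k : ℝ) : ℝ :=
  b ^ ((1 : ℝ) / 4) * phiF j (Real.sqrt b * x - k / Real.sqrt b)

open Filter Asymptotics Topology

/-!
Since `φ_j²` is even, the substitution `t = k / √b - √b x` turns the integral into the tail
`∫_s^∞ φ_j(t)² dt` at `s = k / √b`. The Hermite polynomial `H_{j-1}` has leading term
`(2t)^{j-1}`, so `φ_j(t)²` is asymptotic to a positive multiple of `t^{2j-2} e^{-t²}`. The
function `s^{p-1} e^{-s²} / 2` has derivative `-s^p e^{-s²} (1 + O(s⁻²))`, so by the rule of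
l'Hôpital it is asymptotic to the tail of `t^p e^{-t²}`. This gives the sharp asymptotics of the
integral as `k → ∞`, which is stronger than two-sided bounds.
-/

theorem hasDerivAt_integral_Ioi {E : Type*} [NormedAddCommGroup E] [NormedSpace ℝ E]
    [CompleteSpace E] {f : ℝ → E} {r x : ℝ} (hfi : IntegrableOn f (Ioi r)) (hrx : r < x)
    (hf : ContinuousAt f x) : HasDerivAt (fun s => ∫ t in Ioi s, f t) (-f x) x := by
  obtain ⟨y, hry, hyx⟩ := exists_between hrx
  have hfy : IntegrableOn f (Ioi y) := hfi.mono_set (Ioi_subset_Ioi hry.le)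
  have hprim : HasDerivAt (fun s => ∫ t in y..s, f t) (f x) x :=
    intervalIntegral.integral_hasDerivAt_right
      ((intervalIntegrable_iff_integrableOn_Ioc_of_le hyx.le).2
        (hfy.mono_set Ioc_subset_Ioi_self))
      (AEStronglyMeasurable.stronglyMeasurableAtFilter_of_mem hfy.aestronglyMeasurable
        (Ioi_mem_nhds hyx)) hf
  refine (hprim.const_sub (∫ t in Ioi y, f t)).congr_of_eventuallyEq ?_
  filter_upwards [Ioi_mem_nhds hyx] with s hys
  exact eq_sub_of_add_eq' <| intervalIntegral.integral_interval_add_Ioi hfy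
    (hfy.mono_set (Ioi_subset_Ioi (mem_Ioi.1 hys).le))

theorem isEquivalent_integral_Ioi {f g g' : ℝ → ℝ} {r : ℝ} (hfi : IntegrableOn f (Ioi r))
    (hf : ContinuousOn f (Ioi r)) (hg : ∀ᶠ x in atTop, HasDerivAt g (-g' x) x)
    (hg₀ : Tendsto g atTop (𝓝 0)) (hg' : ∀ᶠ x in atTop, g' x ≠ 0) (h : f ~[atTop] g') :
    (fun s => ∫ t in Ioi s, f t) ~[atTop] g := by
  refine isEquivalent_of_tendsto_one (HasDerivAt.lhopital_zero_atTop (f' := fun x => -f x) ?_ hg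
    (hg'.mono fun _ => neg_ne_zero.2) (tendsto_integral_Ioi_zero tendsto_id) hg₀ ?_)
  · filter_upwards [eventually_gt_atTop r] with x hx
    exact hasDerivAt_integral_Ioi hfi hx (hf.continuousAt (Ioi_mem_nhds hx))
  · simpa only [neg_div_neg_eq, Pi.div_def] using (isEquivalent_iff_tendsto_one hg').1 h

theorem hasDerivAt_rpow_mul_exp_neg_mul_sq {a : ℝ} (ha : a ≠ 0) (p : ℝ) {x : ℝ} (hx : 0 < x) :
    HasDerivAt (fun s => s ^ (p - 1) * exp (-a * s ^ 2))
      (-(2 * a) * (x ^ p * exp (-a * x ^ 2) * (1 - (p - 1) / (2 * a) * x ^ (-2 : ℝ)))) x := by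
  have hexp : HasDerivAt (fun s => exp (-a * s ^ 2)) (exp (-a * x ^ 2) * (-a * (2 * x))) x := by
    simpa using ((hasDerivAt_pow 2 x).const_mul (-a)).exp
  have hpow₁ : x ^ (p - 1) * x = x ^ p := by
    rw [← rpow_add_one hx.ne', sub_add_cancel]
  have hpow₂ : x ^ (p - 1 - 1) = x ^ p * x ^ (-2 : ℝ) := by
    rw [← rpow_add hx]; congr 1; ring
  refine ((hasDerivAt_rpow_const (Or.inl hx.ne')).mul hexp).congr_deriv ?_
  rw [hpow₂, ← hpow₁]
  field_simp
  ring

theorem isEquivalent_integral_Ioi_of_rpow_mul_exp_neg_mul_sq {f : ℝ → ℝ} {a c p r : ℝ}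
    (ha : 0 < a) (hc : c ≠ 0) (hf : ContinuousOn f (Ici r))
    (h : f ~[atTop] fun t => c * (t ^ p * exp (-a * t ^ 2))) :
    (fun s => ∫ t in Ioi s, f t) ~[atTop]
      fun s => c / (2 * a) * (s ^ (p - 1) * exp (-a * s ^ 2)) := by
  have hfi : IntegrableOn f (Ioi r) := integrable_of_isBigO_exp_neg one_half_pos hf <|
    h.isBigO.trans ((rpow_mul_exp_neg_mul_sq_isLittleO_exp_neg ha p).isBigO.const_mul_left c)
  have hfactor : Tendsto (fun x : ℝ => 1 - (p - 1) / (2 * a) * x ^ (-2 : ℝ)) atTop (𝓝 1) := by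
    simpa using ((tendsto_rpow_neg_atTop two_pos).const_mul ((p - 1) / (2 * a))).const_sub 1
  refine isEquivalent_integral_Ioi
    (g' := fun x => c * (x ^ p * exp (-a * x ^ 2)) * (1 - (p - 1) / (2 * a) * x ^ (-2 : ℝ)))
    hfi (hf.mono Ioi_subset_Ici_self) ?_ ?_ ?_ ?_
  · filter_upwards [eventually_gt_atTop 0] with x hx
    refine ((hasDerivAt_rpow_mul_exp_neg_mul_sq ha.ne' p hx).const_mul _).congr_deriv ?_
    field_simp
  · have hexp : Tendsto (fun x : ℝ => exp (-(1 / 2) * x)) atTop (𝓝 0) :=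
      tendsto_exp_atBot.comp (tendsto_id.const_mul_atTop_of_neg (by norm_num))
    simpa using ((rpow_mul_exp_neg_mul_sq_isLittleO_exp_neg ha (p - 1)).isBigO.trans_tendsto
      hexp).const_mul (c / (2 * a))
  · filter_upwards [hfactor.eventually_ne one_ne_zero, eventually_gt_atTop 0] with x hx₁ hx
    positivity
  · refine h.trans ?_
    simpa using! IsEquivalent.refl.mul ((isEquivalent_const_iff_tendsto one_ne_zero).2 hfactor).symm

theorem integral_Iio_comp_mul_sub {E : Type*} [NormedAddCommGroup E] [NormedSpace ℝ E]
    (f : ℝ → E) {a : ℝ} (ha : 0 < a) (c : ℝ) :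
    ∫ x in Iio 0, f (a * x - c) = a⁻¹ • ∫ t in Ioi c, f (-t) := by
  calc ∫ x in Iio 0, f (a * x - c) = ∫ x in Ioi 0, f (-(a * x + c)) := by
        rw [← integral_Iic_eq_integral_Iio, ← neg_zero, ← integral_comp_neg_Ioi]
        simp only [mul_neg, neg_add', neg_zero]
    _ = a⁻¹ • ∫ x in Ioi 0, f (-(x + c)) := by
        rw [integral_comp_mul_left_Ioi (fun x => f (-(x + c))) 0 ha, mul_zero]
    _ = a⁻¹ • ∫ t in Ioi c, f (-t) := by
        rw [← (measurePreserving_add_right volume c).setIntegral_preimage_emb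
          (measurableEmbedding_addRight c) (fun t => f (-t)), preimage_add_const_Ioi, sub_self]

theorem eventually_mul_le_and_le_mul_of_isEquivalent {α : Type*} {l : Filter α} {u v : α → ℝ}
    (h : u ~[l] v) (hv : ∀ᶠ x in l, 0 ≤ v x) {ε : ℝ} (hε : 0 < ε) :
    ∀ᶠ x in l, (1 - ε) * v x ≤ u x ∧ u x ≤ (1 + ε) * v x := by
  filter_upwards [h.isLittleO.def hε, hv] with x hx hvx
  rw [Pi.sub_apply, norm_of_nonneg hvx, norm_eq_abs, abs_le] at hx
  constructor <;> linarith

theorem hermiteP_eq_aeval_hermite (q : ℕ) (x : ℝ) :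
    hermiteP q x = √2 ^ q * Polynomial.aeval (√2 * x) (Polynomial.hermite q) := by
  have hsq (t : ℝ) : (√2 * t) ^ 2 / 2 = t ^ 2 := by
    rw [mul_pow, sq_sqrt zero_le_two]; ring
  have hderiv : iteratedDeriv q (fun t => exp (-t ^ 2)) x = √2 ^ q *
      ((-1) ^ q * Polynomial.aeval (√2 * x) (Polynomial.hermite q) * exp (-x ^ 2)) := by
    have hscale := congrFun (iteratedDeriv_comp_const_mul (n := q)
      (f := fun y => exp (-(y ^ 2 / 2))) (by fun_prop) √2) x
    simpa only [hsq, iteratedDeriv_eq_iterate,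
      Polynomial.deriv_gaussian_eq_hermite_mul_gaussian] using hscale
  have hsign : (-1 : ℝ) ^ q * (-1) ^ q = 1 := by rw [← mul_pow]; norm_num
  have hexp : exp (x ^ 2) * exp (-x ^ 2) = 1 := by rw [← exp_add, add_neg_cancel, exp_zero]
  rw [hermiteP, hderiv]
  linear_combination √2 ^ q * Polynomial.aeval (√2 * x) (Polynomial.hermite q) *
    (exp (x ^ 2) * exp (-x ^ 2) * hsign + hexp)

theorem continuous_hermiteP (q : ℕ) : Continuous (hermiteP q) := by
  simp only [funext (hermiteP_eq_aeval_hermite q)]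
  fun_prop

theorem hermiteP_neg (q : ℕ) (x : ℝ) : hermiteP q (-x) = (-1) ^ q * hermiteP q x := by
  have hderiv := iteratedDeriv_comp_neg q (fun t : ℝ => exp (-t ^ 2)) (-x)
  simp only [neg_sq, neg_neg, smul_eq_mul] at hderiv
  rw [hermiteP, hermiteP, hderiv, neg_sq]
  ring

theorem isEquivalent_hermiteP (q : ℕ) : hermiteP q ~[atTop] fun x => (2 * x) ^ q := by
  have hlead :
      (fun x : ℝ => Polynomial.aeval x (Polynomial.hermite q)) ~[atTop] fun x => x ^ q := by
    have hmonic := (Polynomial.hermite_monic q).map (Int.castRingHom ℝ)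
    simpa [Polynomial.aeval_def, Polynomial.eval_map, hmonic.leadingCoeff,
      (Polynomial.hermite_monic q).natDegree_map] using
      Polynomial.isEquivalent_atTop_lead ((Polynomial.hermite q).map (Int.castRingHom ℝ))
  have hscale : Tendsto (fun x : ℝ => √2 * x) atTop atTop :=
    tendsto_id.const_mul_atTop (by positivity)
  convert (IsEquivalent.refl (u := fun _ : ℝ => √2 ^ q)).mul (hlead.comp_tendsto hscale) using 1
  · exact funext (hermiteP_eq_aeval_hermite q)
  · ext x
    simp [← mul_pow, ← mul_assoc]

/-- The leading coefficient of the polynomial `φ_j(t)² e^{t²}`, which has degree `2(j-1)`; it is the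
constant in the asymptotics of `φ_j²` and of its tail integrals. -/
noncomputable def phiFSqLeadingCoeff (j : ℕ) : ℝ :=
  2 ^ (j - 1) / (√π * (j - 1).factorial)

theorem phiFSqLeadingCoeff_pos (j : ℕ) : 0 < phiFSqLeadingCoeff j := by
  unfold phiFSqLeadingCoeff
  positivity

theorem phiF_sq (j : ℕ) (x : ℝ) :
    phiF j x ^ 2 = (√π * (j - 1).factorial * 2 ^ (j - 1))⁻¹ *
      hermiteP (j - 1) x ^ 2 * exp (-x ^ 2) := by
  rw [phiF, mul_pow, mul_pow, inv_pow, sq_sqrt (by positivity), ← exp_nat_mul]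
  congr 2
  push_cast
  ring

theorem phiF_neg_sq (j : ℕ) (x : ℝ) : phiF j (-x) ^ 2 = phiF j x ^ 2 := by
  rw [phiF_sq, phiF_sq, hermiteP_neg, mul_pow, ← pow_mul, mul_comm _ 2, pow_mul, neg_sq, neg_sq]
  simp only [one_pow, one_mul]

theorem isEquivalent_phiF_sq {j : ℕ} (hj : 1 ≤ j) :
    (fun t => phiF j t ^ 2) ~[atTop]
      fun t => phiFSqLeadingCoeff j * (t ^ (2 * (j : ℝ) - 2) * exp (-t ^ 2)) := by
  simp only [phiF_sq]
  refine ((IsEquivalent.refl.mul ((isEquivalent_hermiteP (j - 1)).pow 2)).mul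
    IsEquivalent.refl).congr_right (Eventually.of_forall fun t => ?_)
  have hexponent : 2 * (j : ℝ) - 2 = ((2 * (j - 1) : ℕ) : ℝ) := by
    push_cast [hj]; ring
  simp only [Pi.mul_apply, Pi.pow_apply, phiFSqLeadingCoeff, hexponent, rpow_natCast]
  field_simp
  ring

theorem isEquivalent_integral_Ioi_phiF_sq {j : ℕ} (hj : 1 ≤ j) :
    (fun s => ∫ t in Ioi s, phiF j t ^ 2) ~[atTop]
      fun s => phiFSqLeadingCoeff j / 2 * (s ^ (2 * (j : ℝ) - 3) * exp (-s ^ 2)) := by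
  have hcont : Continuous fun t => phiF j t ^ 2 := by
    have hhermite := continuous_hermiteP (j - 1)
    simp only [phiF_sq]
    fun_prop
  have htail := isEquivalent_integral_Ioi_of_rpow_mul_exp_neg_mul_sq (r := 0) one_pos
    (phiFSqLeadingCoeff_pos j).ne' hcont.continuousOn
    (by simpa only [neg_one_mul] using isEquivalent_phiF_sq hj)
  have hexponent : 2 * (j : ℝ) - 2 - 1 = 2 * j - 3 := by ring
  simpa only [neg_one_mul, mul_one, hexponent] using htail

theorem integral_Iio_psiInf_sq_eq_integral_Ioi {b : ℝ} (hb : 0 < b) (j : ℕ) (k : ℝ) :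
    ∫ x in Iio 0, psiInf b j x k ^ 2 = ∫ t in Ioi (k / √b), phiF j t ^ 2 := by
  have hsqrt : (b ^ ((1 : ℝ) / 4)) ^ 2 = √b := by
    rw [← rpow_natCast, ← rpow_mul hb.le, sqrt_eq_rpow]; norm_num
  have hsqrt_pos : 0 < √b := sqrt_pos.2 hb
  simp only [psiInf, mul_pow, hsqrt]
  rw [integral_const_mul, integral_Iio_comp_mul_sub (fun t => phiF j t ^ 2) hsqrt_pos]
  simp only [phiF_neg_sq, smul_eq_mul]
  rw [mul_inv_cancel_left₀ hsqrt_pos.ne']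

theorem isEquivalent_integral_Iio_psiInf_sq {b : ℝ} (hb : 0 < b) {j : ℕ} (hj : 1 ≤ j) :
    (fun k => ∫ x in Iio 0, psiInf b j x k ^ 2) ~[atTop] fun k =>
      phiFSqLeadingCoeff j / (2 * √b ^ (2 * (j : ℝ) - 3)) *
        (k ^ (2 * (j : ℝ) - 3) * exp (-k ^ 2 / b)) := by
  simp only [integral_Iio_psiInf_sq_eq_integral_Ioi hb]
  refine ((isEquivalent_integral_Ioi_phiF_sq hj).comp_tendsto
    (tendsto_id.atTop_div_const (sqrt_pos.2 hb))).congr_right ?_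
  filter_upwards [eventually_ge_atTop 0] with k hk
  simp only [Function.comp_apply, id, div_rpow hk (sqrt_nonneg b), div_pow, sq_sqrt hb.le,
    neg_div]
  field_simp

/-- Fix `b > 0` and an integer `j ≥ 1`. Then there exist constants `K > 0` and
`c₋, c₊ > 0` such that for every `k ≥ K` one has
`c₋ k^{2j-3} e^{-k²/b} ≤ ∫_{-∞}^0 ψ_{j,∞}(x;k)² dx ≤ c₊ k^{2j-3} e^{-k²/b}`. -/
theorem stmt3 (b : ℝ) (hb : 0 < b) (j : ℕ) (hj : 1 ≤ j) :
    ∃ K > (0 : ℝ), ∃ cm > (0 : ℝ), ∃ cp > (0 : ℝ), ∀ k : ℝ, K ≤ k →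
      cm * k ^ (2 * (j : ℝ) - 3) * Real.exp (-k ^ 2 / b)
          ≤ ∫ x in Set.Iio (0 : ℝ), (psiInf b j x k) ^ 2 ∧
      ∫ x in Set.Iio (0 : ℝ), (psiInf b j x k) ^ 2
          ≤ cp * k ^ (2 * (j : ℝ) - 3) * Real.exp (-k ^ 2 / b) := by
  set C := phiFSqLeadingCoeff j / (2 * √b ^ (2 * (j : ℝ) - 3))
  have hC : 0 < C := div_pos (phiFSqLeadingCoeff_pos j) (by positivity)
  have hnonneg : ∀ᶠ k in atTop, 0 ≤ C * (k ^ (2 * (j : ℝ) - 3) * exp (-k ^ 2 / b)) := by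
    filter_upwards [eventually_ge_atTop 0] with k hk
    positivity
  obtain ⟨K, hK⟩ := eventually_atTop.1 <| eventually_mul_le_and_le_mul_of_isEquivalent
    (isEquivalent_integral_Iio_psiInf_sq hb hj) hnonneg one_half_pos
  refine ⟨max K 1, by positivity, (1 - 1 / 2) * C, by linarith, (1 + 1 / 2) * C, by positivity,
    fun k hk => ?_⟩
  simpa only [mul_assoc] using hK k (le_of_max_le_left hk)
end

section
/- Let p > q > 0. Then there exists a constant C > 0 such that for every λ ∈ (0,1), the two-dimensional Lebesgue measure of the set {(x,ξ) ∈ ℝ² : ⟨x⟩^{−p} ⟨x,ξ⟩^{−q} ≥ λ} is at most C λ^{−1/q}. -/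
open MeasureTheory Real Set

/-!
Since `‖ξ‖ ≤ ⟨x, ξ⟩`, the inequality `lam ≤ ⟨x⟩^(-p) * ⟨x, ξ⟩^(-q)` forces
`‖ξ‖ ≤ lam^(-1/q) * ⟨x⟩^(-p/q)`. The slice over `x` thus lies in a ball whose volume is a constant
times `lam^(-m/q) * ⟨x⟩^(-p * m/q)`, where `m` is the dimension of the `ξ`-space, and this is
integrable in `x` as soon as `p * m / q` exceeds the dimension of the `x`-space.
-/

lemma le_rpow_neg_mul_rpow_neg_iff {a b c p q : ℝ} (ha : 0 < a) (hb : 0 < b) (hc : 0 < c)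
    (hq : 0 < q) :
    c ≤ a ^ (-p) * b ^ (-q) ↔ b ≤ c ^ (-(1 / q)) * a ^ (-(p / q)) := by
  have hroot : (c⁻¹ * a ^ (-p)) ^ q⁻¹ = c ^ (-(1 / q)) * a ^ (-(p / q)) := by
    rw [mul_rpow (by positivity) (by positivity), inv_rpow hc.le, ← rpow_neg hc.le,
      ← rpow_mul ha.le, one_div, div_eq_mul_inv, neg_mul]
  rw [← hroot, le_rpow_inv_iff_of_pos hb.le (by positivity) hq, rpow_neg hb.le,
    ← div_eq_mul_inv, inv_mul_eq_div, le_div_iff₀' (by positivity), le_div_iff₀ hc]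

section Superlevel

variable {α F : Type*} [MeasurableSpace α] [NormedAddCommGroup F] [NormedSpace ℝ F]
  [FiniteDimensional ℝ F] [MeasurableSpace F] [BorelSpace F]

lemma measure_prod_setOf_norm_snd_le (μ : Measure α) (ν : Measure F) [ν.IsAddHaarMeasure]
    {r : α → ℝ} (hr : Measurable r) (hr_nonneg : ∀ x, 0 ≤ r x) :
    μ.prod ν {z | ‖z.2‖ ≤ r z.1} =
      (∫⁻ x, ENNReal.ofReal (r x ^ Module.finrank ℝ F) ∂μ) * ν (Metric.ball 0 1) := by
  have hmeas : MeasurableSet {z : α × F | ‖z.2‖ ≤ r z.1} :=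
    measurableSet_le measurable_snd.norm (hr.comp measurable_fst)
  have hslice (x : α) : Prod.mk x ⁻¹' {z : α × F | ‖z.2‖ ≤ r z.1} = Metric.closedBall 0 (r x) :=
    Set.ext fun _ ↦ mem_closedBall_zero_iff.symm
  simp_rw [Measure.prod_apply hmeas, hslice, Measure.addHaar_closedBall ν 0 (hr_nonneg _)]
  exact lintegral_mul_const _ (hr.pow_const _).ennreal_ofReal

lemma measure_prod_setOf_le_rpow_neg_mul_rpow_neg_le (μ : Measure α) (ν : Measure F)
    [ν.IsAddHaarMeasure] {a : α → ℝ} {b : α × F → ℝ} {p q c : ℝ} (ha : Measurable a)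
    (ha_pos : ∀ x, 0 < a x) (hb_pos : ∀ z, 0 < b z) (hb : ∀ z, ‖z.2‖ ≤ b z) (hq : 0 < q)
    (hc : 0 < c) :
    μ.prod ν {z | c ≤ a z.1 ^ (-p) * b z ^ (-q)} ≤
      ENNReal.ofReal (c ^ (-(Module.finrank ℝ F / q))) *
        (∫⁻ x, ENNReal.ofReal (a x ^ (-(p * Module.finrank ℝ F / q))) ∂μ) *
          ν (Metric.ball 0 1) := by
  set m := Module.finrank ℝ F
  have hr (x : α) : (c ^ (-(1 / q)) * a x ^ (-(p / q))) ^ m =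
      c ^ (-(m / q)) * a x ^ (-(p * m / q)) := by
    rw [mul_pow, ← rpow_mul_natCast hc.le, ← rpow_mul_natCast (ha_pos x).le]
    congr 2 <;> ring
  calc μ.prod ν {z | c ≤ a z.1 ^ (-p) * b z ^ (-q)}
      ≤ μ.prod ν {z | ‖z.2‖ ≤ c ^ (-(1 / q)) * a z.1 ^ (-(p / q))} :=
        measure_mono fun z hz ↦
          (hb z).trans ((le_rpow_neg_mul_rpow_neg_iff (ha_pos z.1) (hb_pos z) hc hq).1 hz)
    _ = (∫⁻ x, ENNReal.ofReal ((c ^ (-(1 / q)) * a x ^ (-(p / q))) ^ m) ∂μ) *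
          ν (Metric.ball 0 1) :=
        measure_prod_setOf_norm_snd_le μ ν ((ha.pow_const _).const_mul _) fun x ↦
          mul_nonneg (by positivity) (rpow_nonneg (ha_pos x).le _)
    _ = _ := by
        simp_rw [hr, ENNReal.ofReal_mul (rpow_nonneg hc.le _)]
        rw [lintegral_const_mul _ (ha.pow_const _).ennreal_ofReal]

end Superlevel

lemma lintegral_sqrt_one_add_norm_sq_rpow_neg_lt_top {E : Type*} [NormedAddCommGroup E]
    [NormedSpace ℝ E] [FiniteDimensional ℝ E] [MeasurableSpace E] [BorelSpace E] (μ : Measure E)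
    [μ.IsAddHaarMeasure] {s : ℝ} (hs : Module.finrank ℝ E < s) :
    ∫⁻ x, ENNReal.ofReal (√(1 + ‖x‖ ^ 2) ^ (-s)) ∂μ < ⊤ := by
  simp_rw [← rpow_div_two_eq_sqrt (-s) (add_nonneg zero_le_one (sq_nonneg _))]
  exact (integrable_rpow_neg_one_add_norm_sq hs).lintegral_lt_top

theorem stmt8_general {E F : Type*} [NormedAddCommGroup E] [NormedSpace ℝ E]
    [FiniteDimensional ℝ E] [MeasurableSpace E] [BorelSpace E] [NormedAddCommGroup F]
    [NormedSpace ℝ F] [FiniteDimensional ℝ F] [MeasurableSpace F] [BorelSpace F]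
    (μ : Measure E) [μ.IsAddHaarMeasure] (ν : Measure F) [ν.IsAddHaarMeasure] {p q : ℝ}
    (hq : 0 < q) (hpq : q * Module.finrank ℝ E < p * Module.finrank ℝ F) :
    ∃ C > (0 : ℝ), ∀ lam : ℝ, 0 < lam →
      μ.prod ν {z : E × F |
          lam ≤ √(1 + ‖z.1‖ ^ 2) ^ (-p) * √(1 + ‖z.1‖ ^ 2 + ‖z.2‖ ^ 2) ^ (-q)}
        ≤ ENNReal.ofReal (C * lam ^ (-(Module.finrank ℝ F / q))) := by
  set m := Module.finrank ℝ F
  set K := (∫⁻ x, ENNReal.ofReal (√(1 + ‖x‖ ^ 2) ^ (-(p * m / q))) ∂μ) * ν (Metric.ball 0 1)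
  have hK : K < ⊤ := ENNReal.mul_lt_top
    (lintegral_sqrt_one_add_norm_sq_rpow_neg_lt_top μ ((lt_div_iff₀' hq).2 hpq))
    measure_ball_lt_top
  have hnorm (z : E × F) : ‖z.2‖ ≤ √(1 + ‖z.1‖ ^ 2 + ‖z.2‖ ^ 2) :=
    le_sqrt_of_sq_le (le_add_of_nonneg_left (by positivity))
  refine ⟨K.toReal + 1, by positivity, fun lam hlam ↦ ?_⟩
  calc μ.prod ν _ ≤ ENNReal.ofReal (lam ^ (-(m / q))) * K :=
        (measure_prod_setOf_le_rpow_neg_mul_rpow_neg_le μ ν (by fun_prop)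
          (fun x ↦ by positivity) (fun z ↦ by positivity) hnorm hq hlam).trans_eq (mul_assoc ..)
    _ ≤ ENNReal.ofReal (lam ^ (-(m / q))) * ENNReal.ofReal (K.toReal + 1) := by
        gcongr
        exact (ENNReal.le_ofReal_iff_toReal_le hK.ne (by positivity)).2 (lt_add_one _).le
    _ = ENNReal.ofReal ((K.toReal + 1) * lam ^ (-(m / q))) := by
        rw [← ENNReal.ofReal_mul (by positivity), mul_comm]

/-- Let `p > q > 0`. Then there is `C > 0` such that for every `λ ∈ (0,1)`, the
two-dimensional Lebesgue measure of `{(x,ξ) : ⟨x⟩^{-p} ⟨x,ξ⟩^{-q} ≥ λ}` is at most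
`C λ^{-1/q}`. -/
theorem stmt8 (p q : ℝ) (hq : 0 < q) (hpq : q < p) :
    ∃ C > (0 : ℝ), ∀ lam : ℝ, 0 < lam → lam < 1 →
      volume {z : ℝ × ℝ |
          lam ≤ (Real.sqrt (1 + z.1 ^ 2)) ^ (-p) *
            (Real.sqrt (1 + z.1 ^ 2 + z.2 ^ 2)) ^ (-q)}
        ≤ ENNReal.ofReal (C * lam ^ (-(1 / q))) := by
  obtain ⟨C, hC, h⟩ := stmt8_general (volume : Measure ℝ) (volume : Measure ℝ) hq (by simpa)
  exact ⟨C, hC, fun lam hlam _ ↦ by simpa [Measure.volume_eq_prod] using h lam hlam⟩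
end

section
/- Let b > 0, K₀ ∈ ℝ and M ≥ 0. Then there exist constants C > 0 and c > 0 such that for every x ≤ 0, ∫_{K₀}^{∞} (1 + (x − b x')²)^{M/2} e^{−(b x' − x)²/b} dx' ≤ C e^{−c x²}. In particular this integral is exponentially decreasing as x → −∞. -/
open MeasureTheory Real Set

/-! With `t = b * x' - x`, the weight `(1 + t ^ 2) ^ (M / 2)` costs an arbitrarily small part of the
Gaussian rate `1 / b`. On the half-line `K₀ < x'`, for `x` bounded above, `|x| ≤ |t| + D` with `D`
independent of `x` and `x'`, so a further part of the rate, as close to all of it as we like, can be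
traded for the factor `exp (-c * x ^ 2)`. What is left is a Gaussian in `x'`, whose integral over
the whole line does not depend on `x`. Every rate `c < 1 / b` is reached in this way. -/

lemma rpow_le_mul_exp_of_one_le (s : ℝ) {ε u : ℝ} (hε : 0 < ε) (hu : 1 ≤ u) :
    u ^ s ≤ (max s 1 / ε) ^ max s 1 * exp (ε * u) :=
  calc u ^ s ≤ u ^ max s 1 := rpow_le_rpow_of_exponent_le hu (le_max_left s 1)
    _ ≤ (max s 1 / ε) ^ max s 1 * exp (ε * u) := by
      simpa only [abs_of_pos hε, abs_of_pos (one_pos.trans_le hu)] using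
        ProbabilityTheory.rpow_abs_le_mul_exp_abs u (le_max_of_le_right zero_le_one) hε.ne'

lemma exists_one_add_sq_rpow_mul_exp_le (s : ℝ) {a r : ℝ} (har : a < r) :
    ∃ A > 0, ∀ t : ℝ, (1 + t ^ 2) ^ s * exp (-r * t ^ 2) ≤ A * exp (-a * t ^ 2) := by
  have hε : 0 < r - a := sub_pos.2 har
  refine ⟨(max s 1 / (r - a)) ^ max s 1 * exp (r - a), by positivity, fun t ↦ ?_⟩
  have hweight := rpow_le_mul_exp_of_one_le s hε (le_add_of_nonneg_right (sq_nonneg t))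
  calc (1 + t ^ 2) ^ s * exp (-r * t ^ 2)
      ≤ (max s 1 / (r - a)) ^ max s 1 * exp ((r - a) * (1 + t ^ 2)) * exp (-r * t ^ 2) := by gcongr
    _ = (max s 1 / (r - a)) ^ max s 1 * exp (r - a) * exp (-a * t ^ 2) := by
      rw [mul_assoc, mul_assoc, ← exp_add, ← exp_add]
      ring_nf

lemma mul_add_sq_le_mul_sq_add {a c : ℝ} (hca : c < a) (t D : ℝ) :
    c * (t + D) ^ 2 ≤ a * t ^ 2 + a * c / (a - c) * D ^ 2 := by
  have hpos : 0 < a - c := sub_pos.2 hca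
  have hsquare : a * t ^ 2 + a * c / (a - c) * D ^ 2 - c * (t + D) ^ 2
      = ((a - c) * t - c * D) ^ 2 / (a - c) := by
    field_simp
    ring
  exact sub_nonneg.1 (hsquare ▸ by positivity)

lemma exp_neg_mul_sq_le_of_abs_le {a c t x D : ℝ} (hc : 0 ≤ c) (hca : c < a)
    (hx : |x| ≤ |t| + D) :
    exp (-a * t ^ 2) ≤ exp (a * c / (a - c) * D ^ 2) * exp (-c * x ^ 2) := by
  have hsq : c * x ^ 2 ≤ a * t ^ 2 + a * c / (a - c) * D ^ 2 :=
    calc c * x ^ 2 = c * |x| ^ 2 := by rw [sq_abs]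
      _ ≤ c * (|t| + D) ^ 2 := by gcongr
      _ ≤ a * |t| ^ 2 + a * c / (a - c) * D ^ 2 := mul_add_sq_le_mul_sq_add hca |t| D
      _ = a * t ^ 2 + a * c / (a - c) * D ^ 2 := by rw [sq_abs]
  rw [← exp_add, exp_le_exp]
  linarith

lemma abs_le_abs_mul_sub_add_max {b K R x y : ℝ} (hb : 0 ≤ b) (hx : x ≤ R) (hy : K ≤ y) :
    |x| ≤ |b * y - x| + max (-(b * K)) R := by
  have hby : b * K ≤ b * y := by gcongr
  rw [abs_le]
  constructor
  · linarith [le_abs_self (b * y - x), le_max_left (-(b * K)) R]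
  · linarith [abs_nonneg (b * y - x), le_max_right (-(b * K)) R]

lemma integrable_exp_neg_mul_sq_mul_sub {b δ : ℝ} (hb : b ≠ 0) (hδ : 0 < δ) (x : ℝ) :
    Integrable fun y : ℝ ↦ exp (-δ * (b * y - x) ^ 2) :=
  ((integrable_exp_neg_mul_sq hδ).comp_sub_right x).comp_mul_left' hb

lemma integral_exp_neg_mul_sq_mul_sub (b δ x : ℝ) :
    ∫ y : ℝ, exp (-δ * (b * y - x) ^ 2) = |b⁻¹| * √(π / δ) := by
  rw [Measure.integral_comp_mul_left (fun t ↦ exp (-δ * (t - x) ^ 2)),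
    integral_sub_right_eq_self (fun t ↦ exp (-δ * t ^ 2)), integral_gaussian, smul_eq_mul]

lemma norm_setIntegral_Ioi_comp_mul_sub_le {E : Type*} [NormedAddCommGroup E] [NormedSpace ℝ E]
    {f : ℝ → E} {A a a' b c K R x : ℝ} (hf : ∀ t, ‖f t‖ ≤ A * exp (-a * t ^ 2))
    (hb : 0 < b) (hc : 0 ≤ c) (hca' : c < a') (ha'a : a' < a) (hx : x ≤ R) :
    ‖∫ y in Ioi K, f (b * y - x)‖ ≤
      A * exp (a' * c / (a' - c) * max (-(b * K)) R ^ 2) * (|b⁻¹| * √(π / (a - a')))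
        * exp (-c * x ^ 2) := by
  set B := exp (a' * c / (a' - c) * max (-(b * K)) R ^ 2)
  set g : ℝ → ℝ := fun y ↦ A * (B * exp (-c * x ^ 2)) * exp (-(a - a') * (b * y - x) ^ 2)
  have hA : 0 ≤ A := by simpa using (norm_nonneg _).trans (hf 0)
  have hg : Integrable g :=
    (integrable_exp_neg_mul_sq_mul_sub hb.ne' (sub_pos.2 ha'a) x).const_mul _
  have hfg : ∀ y ∈ Ioi K, ‖f (b * y - x)‖ ≤ g y := fun y hy ↦
    calc ‖f (b * y - x)‖ ≤ A * exp (-a * (b * y - x) ^ 2) := hf _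
      _ = A * exp (-a' * (b * y - x) ^ 2) * exp (-(a - a') * (b * y - x) ^ 2) := by
        rw [mul_assoc, ← exp_add]
        ring_nf
      _ ≤ A * (B * exp (-c * x ^ 2)) * exp (-(a - a') * (b * y - x) ^ 2) := by
        have htrade := exp_neg_mul_sq_le_of_abs_le hc hca'
          (abs_le_abs_mul_sub_add_max hb.le hx (mem_Ioi.1 hy).le)
        gcongr
  calc ‖∫ y in Ioi K, f (b * y - x)‖
      ≤ ∫ y in Ioi K, g y :=
        norm_integral_le_of_norm_le hg.integrableOn
          (ae_restrict_of_forall_mem measurableSet_Ioi hfg)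
    _ ≤ ∫ y, g y := setIntegral_le_integral hg (.of_forall fun y ↦ by positivity)
    _ = A * B * (|b⁻¹| * √(π / (a - a'))) * exp (-c * x ^ 2) := by
      rw [integral_const_mul, integral_exp_neg_mul_sq_mul_sub]
      ring

theorem stmt11_general (b K₀ M R c : ℝ) (hb : 0 < b) (hc : 0 ≤ c) (hcb : c < 1 / b) :
    ∃ C > (0 : ℝ), ∀ x : ℝ, x ≤ R →
      ∫ x' in Set.Ioi K₀,
          (1 + (x - b * x') ^ 2) ^ (M / 2) * Real.exp (-(b * x' - x) ^ 2 / b)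
        ≤ C * Real.exp (-c * x ^ 2) := by
  obtain ⟨a, hca, hab⟩ := exists_between hcb
  obtain ⟨a', hca', ha'a⟩ := exists_between hca
  obtain ⟨A, hA, hdecay⟩ := exists_one_add_sq_rpow_mul_exp_le (M / 2) hab
  have : 0 < a - a' := sub_pos.2 ha'a
  refine ⟨A * exp (a' * c / (a' - c) * max (-(b * K₀)) R ^ 2) * (|b⁻¹| * √(π / (a - a'))),
    by positivity, fun x hx ↦ ?_⟩
  have hnorm (t : ℝ) : ‖(1 + t ^ 2) ^ (M / 2) * exp (-(1 / b) * t ^ 2)‖ ≤ A * exp (-a * t ^ 2) :=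
    (norm_of_nonneg (by positivity)).trans_le (hdecay t)
  have hintegrand (x' : ℝ) : (1 + (x - b * x') ^ 2) ^ (M / 2) * exp (-(b * x' - x) ^ 2 / b)
      = (1 + (b * x' - x) ^ 2) ^ (M / 2) * exp (-(1 / b) * (b * x' - x) ^ 2) := by
    rw [sub_sq_comm x]
    ring_nf
  simp only [hintegrand]
  exact (le_norm_self _).trans (norm_setIntegral_Ioi_comp_mul_sub_le hnorm hb hc hca' ha'a hx)

/-- Let `b > 0`, `K₀ ∈ ℝ` and `M ≥ 0`. Then there exist `C > 0` and `c > 0` such that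
for every `x ≤ 0`,
`∫_{K₀}^∞ (1 + (x - b x')²)^{M/2} e^{-(b x' - x)²/b} dx' ≤ C e^{-c x²}`. -/
theorem stmt11 (b K₀ M : ℝ) (hb : 0 < b) (hM : 0 ≤ M) :
    ∃ C > (0 : ℝ), ∃ c > (0 : ℝ), ∀ x : ℝ, x ≤ 0 →
      ∫ x' in Set.Ioi K₀,
          (1 + (x - b * x') ^ 2) ^ (M / 2) * Real.exp (-(b * x' - x) ^ 2 / b)
        ≤ C * Real.exp (-c * x ^ 2) := by
  obtain ⟨c, hc, hcb⟩ := exists_between (one_div_pos.2 hb)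
  exact (stmt11_general b K₀ M 0 c hb hc.le hcb).imp fun _ ⟨hC, hbound⟩ ↦ ⟨hC, c, hc, hbound⟩
end

section
/- Let b > 0, α ∈ ℝ, K > 1 and c₋, c₊ > 0. Let E : (K, ∞) → (0, ∞) be a continuous strictly decreasing function with lim_{k→∞} E(k) = 0 and satisfying c₋ k^{α} e^{−k²/b} ≤ E(k) ≤ c₊ k^{α} e^{−k²/b} for all k > K, and let ρ be its inverse function, defined on an interval (0, s₀). Then there exist s₁ ∈ (0, min(s₀,1)) and constants d₋, d₊ > 0 such that for all s ∈ (0, s₁), d₋ (ln(1/s))^{1/2} ≤ ρ(s) ≤ d₊ (ln(1/s))^{1/2}. -/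
open MeasureTheory Real Set Filter

/-!
Taking logarithms turns the two-sided bound on `E` into `-log (E k) = k² / b + O(log k) + O(1)`,
so that `-log (E k) ~ k² / b` as `k → ∞`. On each bounded part of `(K, ∞)` the lower bound keeps `E`
away from `0`, which forces `ρ s → ∞` as `s → 0⁺`. Substituting `k = ρ s` gives
`b log (1 / s) ~ ρ(s)²`, i.e. the sharp asymptotics `ρ(s) ~ √b √(log (1 / s))`.
-/

open Asymptotics Topology

section Asymptotics

variable {ι : Type*} {l : Filter ι} {f g : ι → ℝ}

theorem eventually_mul_le_and_le_mul_of_isEquivalent_s12 {c C : ℝ} (hc : c < 1) (hC : 1 < C)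
    (hg : 0 ≤ᶠ[l] g) (h : f ~[l] g) : ∀ᶠ x in l, c * g x ≤ f x ∧ f x ≤ C * g x := by
  obtain ⟨φ, hφ, hfφ⟩ := h.exists_eq_mul
  filter_upwards [hg, hfφ, hφ.eventually_const_lt hc, hφ.eventually_lt_const hC]
    with x hgx hfx hcx hCx
  rw [hfx]
  exact ⟨mul_le_mul_of_nonneg_right hcx.le hgx, mul_le_mul_of_nonneg_right hCx.le hgx⟩

theorem isEquivalent_sqrt (hg : 0 ≤ g) (h : f ~[l] g) :
    (fun x ↦ √(f x)) ~[l] fun x ↦ √(g x) := by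
  simpa only [sqrt_eq_rpow] using! h.rpow hg (r := 1 / 2)

theorem isTheta_of_eventually_mul_le_and_le_mul {c C : ℝ} (hc : 0 < c) (hg : 0 ≤ᶠ[l] g)
    (h : ∀ᶠ x in l, c * g x ≤ f x ∧ f x ≤ C * g x) : f =Θ[l] g := by
  constructor
  · refine .of_bound C ?_
    filter_upwards [hg, h] with x hgx ⟨hcx, hCx⟩
    rwa [norm_of_nonneg hgx, norm_of_nonneg ((mul_nonneg hc.le hgx).trans hcx)]
  · refine .of_bound c⁻¹ ?_
    filter_upwards [hg, h] with x hgx ⟨hcx, _⟩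
    rwa [norm_of_nonneg hgx, norm_of_nonneg ((mul_nonneg hc.le hgx).trans hcx),
      le_inv_mul_iff₀ hc]

theorem isBigO_log_sub_log_of_isTheta (h : f =Θ[l] g) :
    (fun x ↦ log (f x) - log (g x)) =O[l] fun _ ↦ (1 : ℝ) := by
  obtain ⟨c, hc, hfg⟩ := h.1.exists_pos
  obtain ⟨d, hd, hgf⟩ := h.2.exists_pos
  refine .of_bound (max |-log d| |log c|) ?_
  filter_upwards [hfg.bound, hgf.bound, h.eq_zero_iff] with x hfgx hgfx hzero
  rw [norm_one, mul_one, norm_eq_abs]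
  by_cases hfx : f x = 0
  · simp only [hfx, hzero.1 hfx, sub_self, abs_zero, le_max_iff, abs_nonneg, or_self]
  have hgx : g x ≠ 0 := fun hgx ↦ hfx (hzero.2 hgx)
  have log_f_le : log (f x) ≤ log c + log (g x) := by
    rw [← log_abs (f x), ← log_abs (g x), ← log_mul hc.ne' (abs_ne_zero.2 hgx)]
    exact log_le_log (abs_pos.2 hfx) hfgx
  have log_g_le : log (g x) ≤ log d + log (f x) := by
    rw [← log_abs (f x), ← log_abs (g x), ← log_mul hd.ne' (abs_ne_zero.2 hfx)]
    exact log_le_log (abs_pos.2 hgx) hgfx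
  exact abs_le_max_abs_abs (by linarith) (by linarith)

theorem tendsto_atTop_of_tendsto_comp_zero {X : Type*} [LinearOrder X] [TopologicalSpace X]
    [CompactIccSpace X] {w : X → ℝ} {u : ι → X} {K : X} (hw : ContinuousOn w (Ici K))
    (hpos : ∀ k ∈ Ici K, 0 < w k) (hu : ∀ᶠ i in l, K ≤ u i)
    (hlim : Tendsto (fun i ↦ w (u i)) l (𝓝 0)) : Tendsto u l atTop := by
  refine tendsto_atTop.2 fun M ↦ ?_
  obtain ⟨k₀, hk₀, hmin⟩ := isCompact_Icc.exists_isMinOn (nonempty_Icc.2 (le_max_left K M))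
    (hw.mono Icc_subset_Ici_self)
  filter_upwards [hu, hlim.eventually_lt_const (hpos k₀ hk₀.1)] with i hKi hwi
  by_contra! hiM
  exact hwi.not_ge (hmin ⟨hKi, hiM.le.trans (le_max_right K M)⟩)

end Asymptotics

theorem exists_Ioo_mul_le_and_le_mul_of_isEquivalent_const_mul {f g : ℝ → ℝ} {a δ C : ℝ}
    (hδ : a < δ) (hC : 0 < C) (hg : 0 ≤ g) (h : f ~[𝓝[>] a] fun s ↦ C * g s) :
    ∃ s₁ ∈ Ioo a δ, ∃ dm > 0, ∃ dp > 0, ∀ s ∈ Ioo a s₁, dm * g s ≤ f s ∧ f s ≤ dp * g s := by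
  have hbounds := eventually_mul_le_and_le_mul_of_isEquivalent_s12 one_half_lt_one one_lt_two
    (.of_forall fun s ↦ mul_nonneg hC.le (hg s)) h
  obtain ⟨δ', haδ', hδ'δ⟩ := exists_between hδ
  obtain ⟨s₁, ⟨has₁, hs₁δ'⟩, hs₁⟩ := (mem_nhdsGT_iff_exists_mem_Ioc_Ioo_subset haδ').1 hbounds
  refine ⟨s₁, ⟨has₁, hs₁δ'.trans_lt hδ'δ⟩, 1 / 2 * C, by positivity, 2 * C, by positivity, ?_⟩
  intro s hs
  simpa only [mul_assoc] using! hs₁ hs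

/-- The profile `k^α e^{-k²/b}` to which `E` is comparable; for `b > 0` it is a Gaussian tail with a
power correction. It is meant for `k > 0`, where `k^α` is the usual power. -/
noncomputable def gaussianProfile (b α k : ℝ) : ℝ := k ^ α * exp (-k ^ 2 / b)

section GaussianProfile

variable {b α : ℝ}

theorem gaussianProfile_pos {k : ℝ} (hk : 0 < k) : 0 < gaussianProfile b α k :=
  mul_pos (rpow_pos_of_pos hk α) (exp_pos _)

theorem continuousOn_gaussianProfile : ContinuousOn (gaussianProfile b α) (Ioi 0) :=
  (continuousOn_id.rpow_const fun _ hk ↦ .inl (ne_of_gt hk)).mul (by fun_prop)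

theorem log_gaussianProfile {k : ℝ} (hk : 0 < k) :
    log (gaussianProfile b α k) = α * log k - k ^ 2 / b := by
  rw [gaussianProfile, log_mul (rpow_pos_of_pos hk α).ne' (exp_ne_zero _), log_rpow hk, log_exp]
  ring

theorem tendsto_atTop_of_mul_gaussianProfile_le {ι : Type*} {l : Filter ι} {u ρ : ι → ℝ}
    {K c : ℝ} (hK : 0 < K) (hc : 0 < c) (hu : Tendsto u l (𝓝 0)) (hKρ : ∀ᶠ i in l, K ≤ ρ i)
    (hρu : ∀ᶠ i in l, c * gaussianProfile b α (ρ i) ≤ u i) : Tendsto ρ l atTop := by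
  refine tendsto_atTop_of_tendsto_comp_zero
    (continuousOn_gaussianProfile (b := b) (α := α) |>.mono (Ici_subset_Ioi.2 hK))
    (fun k hk ↦ gaussianProfile_pos (hK.trans_le hk)) hKρ ?_
  have hdiv : Tendsto (fun i ↦ u i / c) l (𝓝 0) := by
    simpa only [zero_div] using hu.div_const c
  refine squeeze_zero' ?_ ?_ hdiv
  · exact hKρ.mono fun i hi ↦ (gaussianProfile_pos (hK.trans_le hi)).le
  · exact hρu.mono fun i hi ↦ (le_div_iff₀' hc).2 hi

theorem isEquivalent_neg_log_of_isTheta_gaussianProfile {E : ℝ → ℝ} (hb : b ≠ 0)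
    (hE : E =Θ[atTop] gaussianProfile b α) :
    (fun k ↦ -log (E k)) ~[atTop] fun k ↦ k ^ 2 / b := by
  have log_isLittleO : log =o[atTop] fun k ↦ k ^ 2 := by
    simpa only [rpow_two] using isLittleO_log_rpow_atTop two_pos
  have one_isLittleO : (fun _ ↦ (1 : ℝ)) =o[atTop] fun k : ℝ ↦ k ^ 2 :=
    isLittleO_const_log_atTop.trans log_isLittleO
  have sq_isTheta : (fun k : ℝ ↦ k ^ 2 / b) =Θ[atTop] fun k ↦ k ^ 2 := by
    simpa only [div_eq_inv_mul] using! (isTheta_const_mul_left (inv_ne_zero hb)).2 isTheta_rfl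
  have error_isLittleO :
      (fun k ↦ log (E k) - log (gaussianProfile b α k) + α * log k) =o[atTop] fun k ↦ k ^ 2 :=
    ((isBigO_log_sub_log_of_isTheta hE).trans_isLittleO one_isLittleO).add
      (log_isLittleO.const_mul_left α)
  refine IsLittleO.isEquivalent (sq_isTheta.isLittleO_congr_right.2 ?_)
  refine error_isLittleO.neg_left.congr' ?_ .rfl
  filter_upwards [eventually_gt_atTop 0] with k hk
  simp only [log_gaussianProfile hk, Pi.sub_apply]
  ring

theorem isEquivalent_sqrt_log_of_isTheta_gaussianProfile {E : ℝ → ℝ} (hb : 0 < b)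
    (hE : E =Θ[atTop] gaussianProfile b α) :
    (fun k ↦ k) ~[atTop] fun k ↦ √b * √(log (1 / E k)) := by
  have hlog : (fun k ↦ b * log (1 / E k)) ~[atTop] fun k ↦ k ^ 2 := by
    have h := (IsEquivalent.refl (u := fun _ ↦ b)).mul
      (isEquivalent_neg_log_of_isTheta_gaussianProfile hb.ne' hE)
    refine (h.congr_left ?_).congr_right ?_
    · exact .of_forall fun k ↦ by simp only [Pi.mul_apply, one_div, log_inv]
    · exact .of_forall fun k ↦ mul_div_cancel₀ _ hb.ne'
  refine ((isEquivalent_sqrt sq_nonneg hlog).symm.congr_left ?_).congr_right ?_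
  · exact (eventually_ge_atTop 0).mono fun k ↦ sqrt_sq
  · exact .of_forall fun k ↦ sqrt_mul hb.le _

end GaussianProfile

theorem stmt12_general (b α K cm cp : ℝ) (hb : 0 < b) (hK : 0 < K) (hcm : 0 < cm) (E : ℝ → ℝ)
    (hbd : ∀ k, K < k →
      cm * k ^ α * exp (-k ^ 2 / b) ≤ E k ∧ E k ≤ cp * k ^ α * exp (-k ^ 2 / b))
    (s₀ : ℝ) (hs₀ : 0 < s₀) (ρ : ℝ → ℝ) (hρ : ∀ s ∈ Ioo 0 s₀, K < ρ s ∧ E (ρ s) = s) :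
    ρ ~[𝓝[>] 0] fun s ↦ √b * √(log (1 / s)) := by
  have hprofile : ∀ k, K < k →
      cm * gaussianProfile b α k ≤ E k ∧ E k ≤ cp * gaussianProfile b α k := by
    simpa only [gaussianProfile, mul_assoc] using hbd
  have hE : E =Θ[atTop] gaussianProfile b α :=
    isTheta_of_eventually_mul_le_and_le_mul hcm
      ((eventually_gt_atTop 0).mono fun k hk ↦ (gaussianProfile_pos hk).le)
      ((eventually_gt_atTop K).mono hprofile)
  have hρ_ev : ∀ᶠ s in 𝓝[>] 0, K < ρ s ∧ E (ρ s) = s :=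
    eventually_of_mem (Ioo_mem_nhdsGT hs₀) hρ
  have hρ_atTop : Tendsto ρ (𝓝[>] 0) atTop :=
    tendsto_atTop_of_mul_gaussianProfile_le hK hcm (tendsto_id.mono_left nhdsWithin_le_nhds)
      (hρ_ev.mono fun s hs ↦ hs.1.le)
      (hρ_ev.mono fun s hs ↦ (hprofile _ hs.1).1.trans_eq hs.2)
  refine ((isEquivalent_sqrt_log_of_isTheta_gaussianProfile hb hE).comp_tendsto
    hρ_atTop).congr_right ?_
  exact hρ_ev.mono fun s hs ↦ by simp only [Function.comp_apply, hs.2]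

/-- Let `b > 0`, `α ∈ ℝ`, `K > 1`, `c₋, c₊ > 0`. Let `E : (K,∞) → (0,∞)` be continuous,
strictly decreasing, tending to `0` at `∞` with `c₋ k^α e^{-k²/b} ≤ E(k) ≤ c₊ k^α e^{-k²/b}`
for `k > K`, and let `ρ` be its inverse, defined on `(0, s₀)`. Then there are
`s₁ ∈ (0, min(s₀,1))` and `d₋, d₊ > 0` with
`d₋ (ln(1/s))^{1/2} ≤ ρ(s) ≤ d₊ (ln(1/s))^{1/2}` for all `s ∈ (0, s₁)`. -/
theorem stmt12 (b α K cm cp : ℝ) (hb : 0 < b) (hK : 1 < K) (hcm : 0 < cm) (hcp : 0 < cp)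
    (E : ℝ → ℝ)
    (hcont : ContinuousOn E (Set.Ioi K))
    (hanti : StrictAntiOn E (Set.Ioi K))
    (hpos : ∀ k, K < k → 0 < E k)
    (hlim : Tendsto E atTop (nhds 0))
    (hbd : ∀ k, K < k →
      cm * k ^ α * Real.exp (-k ^ 2 / b) ≤ E k ∧ E k ≤ cp * k ^ α * Real.exp (-k ^ 2 / b))
    (s₀ : ℝ) (hs₀ : 0 < s₀) (ρ : ℝ → ℝ)
    (hρ : ∀ s ∈ Set.Ioo (0 : ℝ) s₀, K < ρ s ∧ E (ρ s) = s) :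
    ∃ s₁ ∈ Set.Ioo (0 : ℝ) (min s₀ 1), ∃ dm > (0 : ℝ), ∃ dp > (0 : ℝ),
      ∀ s ∈ Set.Ioo (0 : ℝ) s₁,
        dm * Real.sqrt (Real.log (1 / s)) ≤ ρ s ∧
        ρ s ≤ dp * Real.sqrt (Real.log (1 / s)) :=
  exists_Ioo_mul_le_and_le_mul_of_isEquivalent_const_mul (lt_min hs₀ one_pos) (sqrt_pos.2 hb)
    (fun _ ↦ sqrt_nonneg _)
    (stmt12_general b α K cm cp hb (one_pos.trans hK) hcm E hbd s₀ hs₀ ρ hρ)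
end

section
/- Let η > 1. Then there exist C > 0 and λ₀ ∈ (0, 1/η) such that for every λ ∈ (0, λ₀) and every ε ∈ (0, λ/2), ∫_{(0, λ−ε) ∪ (λ+ε, ηλ)} ds / ( |λ − s| (ln(1/s))^{3/2} ) ≤ C ln(1/ε) / (ln(1/λ))^{3/2}. -/
open MeasureTheory Real Set

/-!
Split the integrand into the singular kernel `1 / |λ - s|` and a weight which is a power of
`log (1 / s)`. Translation and reflection reduce the kernel over `ε < |λ - s| < 1` to
`2 ∫ t in ε..1, 1 / t = 2 log (1 / ε)`. The weight varies slowly: given `λ₀ < 1 / η`, there is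
`c > 0` such that `η λ ≤ λ ^ c` for all `λ < λ₀`, so every `s < η λ` satisfies
`log (1 / s) ≥ c log (1 / λ)`, and the weight can be taken out of the integral at the cost of
a constant factor.
-/

section Kernel

variable {x r R : ℝ}

lemma measurableSet_abs_sub_mem_Ioo : MeasurableSet {s | |x - s| ∈ Ioo r R} :=
  measurableSet_Ioo.preimage (by fun_prop)

lemma integrableOn_inv_abs_sub (hr : 0 < r) :
    IntegrableOn (fun s ↦ |x - s|⁻¹) {s | |x - s| ∈ Ioo r R} := by
  have hsub : {s | |x - s| ∈ Ioo r R} ⊆ Ioo (x - R) (x + R) := fun s hs ↦ by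
    have := abs_lt.1 hs.2
    constructor <;> linarith
  refine Measure.integrableOn_of_bounded (M := r⁻¹)
    ((measure_mono hsub).trans_lt measure_Ioo_lt_top).ne (by fun_prop) ?_
  filter_upwards [ae_restrict_mem measurableSet_abs_sub_mem_Ioo] with s hs
  rw [norm_inv, norm_eq_abs, abs_abs]
  exact inv_anti₀ hr hs.1.le

lemma setIntegral_inv_abs_sub (hr : 0 < r) (hrR : r ≤ R) :
    ∫ s in {s | |x - s| ∈ Ioo r R}, |x - s|⁻¹ = 2 * log (R / r) := by
  let k : ℝ → ℝ := (Ioo r R).indicator (·⁻¹)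
  calc ∫ s in {s | |x - s| ∈ Ioo r R}, |x - s|⁻¹
      = ∫ s, k |x - s| := (integral_indicator measurableSet_abs_sub_mem_Ioo).symm
    _ = ∫ t, k |t| := integral_sub_left_eq_self (fun t ↦ k |t|) volume x
    _ = 2 * ∫ t in Ioi 0, k t := integral_comp_abs
    _ = 2 * ∫ t in Ioo r R, t⁻¹ := by
      rw [setIntegral_indicator measurableSet_Ioo,
        inter_eq_right.2 (Ioo_subset_Ioi_self.trans (Ioi_subset_Ioi hr.le))]
    _ = 2 * log (R / r) := by
      rw [← integral_Ioc_eq_integral_Ioo, ← intervalIntegral.integral_of_le hrR,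
        integral_inv_of_pos hr (hr.trans_le hrR)]

variable {S : Set ℝ} {w : ℝ → ℝ} {m : ℝ}

lemma one_div_abs_sub_mul_le {s : ℝ} (hm : 0 < m) (hw : m ≤ w s) :
    1 / (|x - s| * w s) ≤ m⁻¹ * |x - s|⁻¹ := by
  rw [one_div, mul_inv, mul_comm]
  gcongr

lemma integrableOn_one_div_abs_sub_mul (hr : 0 < r) (hS : MeasurableSet S)
    (hSsub : S ⊆ {s | |x - s| ∈ Ioo r R}) (hw : Measurable w) (hm : 0 < m)
    (hmw : ∀ s ∈ S, m ≤ w s) :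
    IntegrableOn (fun s ↦ 1 / (|x - s| * w s)) S := by
  refine (((integrableOn_inv_abs_sub hr).mono_set hSsub).const_mul m⁻¹).mono'
    (by fun_prop : Measurable _).aestronglyMeasurable ?_
  filter_upwards [ae_restrict_mem hS] with s hs
  have hws : 0 < w s := hm.trans_le (hmw s hs)
  rw [norm_of_nonneg (by positivity)]
  exact one_div_abs_sub_mul_le hm (hmw s hs)

lemma setIntegral_one_div_abs_sub_mul_le (hr : 0 < r) (hrR : r ≤ R) (hS : MeasurableSet S)
    (hSsub : S ⊆ {s | |x - s| ∈ Ioo r R}) (hw : Measurable w) (hm : 0 < m)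
    (hmw : ∀ s ∈ S, m ≤ w s) :
    ∫ s in S, 1 / (|x - s| * w s) ≤ 2 * log (R / r) / m := by
  have hkernel : IntegrableOn (fun s ↦ |x - s|⁻¹) {s | |x - s| ∈ Ioo r R} :=
    integrableOn_inv_abs_sub hr
  calc ∫ s in S, 1 / (|x - s| * w s)
      ≤ ∫ s in S, m⁻¹ * |x - s|⁻¹ :=
        setIntegral_mono_on (integrableOn_one_div_abs_sub_mul hr hS hSsub hw hm hmw)
          ((hkernel.mono_set hSsub).const_mul m⁻¹) hS
          fun s hs ↦ one_div_abs_sub_mul_le hm (hmw s hs)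
    _ = m⁻¹ * ∫ s in S, |x - s|⁻¹ := integral_const_mul _ _
    _ ≤ m⁻¹ * ∫ s in {s | |x - s| ∈ Ioo r R}, |x - s|⁻¹ := by
      gcongr ?_ * ?_
      exact setIntegral_mono_set hkernel (ae_of_all _ fun s ↦ by positivity) hSsub.eventuallyLE
    _ = 2 * log (R / r) / m := by
      rw [setIntegral_inv_abs_sub hr hrR, inv_mul_eq_div]

end Kernel

lemma mul_log_one_div_le_of_le_rpow {c x s : ℝ} (hx : 0 < x) (hs : 0 < s) (hsx : s ≤ x ^ c) :
    c * log (1 / x) ≤ log (1 / s) := by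
  have hlog : log s ≤ c * log x := (log_le_log hs hsx).trans_eq (log_rpow hx c)
  simp only [one_div, log_inv]
  linarith

lemma exists_forall_mul_le_rpow {η x₀ : ℝ} (hη : 1 ≤ η) (hx₀ : x₀ ∈ Ioo 0 (1 / η)) :
    ∃ c > (0 : ℝ), ∀ x ∈ Ioc 0 x₀, η * x ≤ x ^ c := by
  have hη₀ : 0 < η := one_pos.trans_le hη
  have hprod : x₀ * η < 1 := (lt_div_iff₀ hη₀).1 hx₀.2
  have hx₀_lt : x₀ < 1 := (le_mul_of_one_le_right hx₀.1.le hη).trans_lt hprod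
  -- The exponent is chosen so that equality holds at `x₀`.
  refine ⟨logb x₀ (x₀ * η), logb_pos_of_base_lt_one hx₀.1 hx₀_lt (mul_pos hx₀.1 hη₀) hprod,
    fun x hx ↦ ?_⟩
  have hexp : logb x₀ (x₀ * η) = logb x₀ η + 1 := by
    have hself : logb x₀ x₀ = 1 := div_self (log_neg hx₀.1 hx₀_lt).ne
    rw [logb_mul hx₀.1.ne' hη₀.ne', hself, add_comm]
  calc η * x = x₀ ^ logb x₀ η * x := by rw [rpow_logb hx₀.1 hx₀_lt.ne hη₀]
    _ ≤ x ^ logb x₀ η * x := by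
      gcongr ?_ * _
      · exact hx.1.le
      · exact rpow_le_rpow_of_nonpos hx.1 hx.2
          ((logb_nonpos_iff_of_base_lt_one hx₀.1 hx₀_lt hη₀).2 hη)
    _ = x ^ logb x₀ (x₀ * η) := by rw [hexp, rpow_add_one hx.1.ne']

theorem integrableOn_and_setIntegral_one_div_abs_sub_mul_log_rpow_le {x ε c p : ℝ} {S : Set ℝ}
    (hx : x ∈ Ioo 0 1) (hε : ε ∈ Ioo 0 1) (hc : 0 < c) (hp : 0 ≤ p) (hS : MeasurableSet S)
    (hS_Ioc : S ⊆ Ioc 0 (x ^ c)) (hS_far : ∀ s ∈ S, ε < |x - s|) :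
    IntegrableOn (fun s ↦ 1 / (|x - s| * log (1 / s) ^ p)) S ∧
      ∫ s in S, 1 / (|x - s| * log (1 / s) ^ p)
        ≤ 2 / c ^ p * log (1 / ε) / log (1 / x) ^ p := by
  have hlogx : 0 < log (1 / x) := log_pos (one_lt_one_div hx.1 hx.2)
  have hannulus : S ⊆ {s | |x - s| ∈ Ioo ε 1} := fun s hs ↦ by
    have hs_lt : s < 1 + x := by
      linarith [(hS_Ioc hs).2, rpow_lt_one hx.1.le hx.2 hc, hx.1]
    exact ⟨hS_far s hs, abs_lt.2 ⟨by linarith, by linarith [(hS_Ioc hs).1, hx.2]⟩⟩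
  have hweight : ∀ s ∈ S, (c * log (1 / x)) ^ p ≤ log (1 / s) ^ p := fun s hs ↦
    rpow_le_rpow (by positivity)
      (mul_log_one_div_le_of_le_rpow hx.1 (hS_Ioc hs).1 (hS_Ioc hs).2) hp
  have hmeas : Measurable fun s : ℝ ↦ log (1 / s) ^ p := by fun_prop
  have hm : 0 < (c * log (1 / x)) ^ p := by positivity
  refine ⟨integrableOn_one_div_abs_sub_mul hε.1 hS hannulus hmeas hm hweight, ?_⟩
  calc ∫ s in S, 1 / (|x - s| * log (1 / s) ^ p)
      ≤ 2 * log (1 / ε) / (c * log (1 / x)) ^ p :=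
        setIntegral_one_div_abs_sub_mul_le hε.1 hε.2.le hS hannulus hmeas hm hweight
    _ = 2 / c ^ p * log (1 / ε) / log (1 / x) ^ p := by
      rw [mul_rpow hc.le hlogx.le]
      ring

theorem stmt15_general {η lam₀ p : ℝ} (hη : 1 ≤ η) (hlam₀ : lam₀ ∈ Ioo 0 (1 / η))
    (hp : 0 ≤ p) :
    ∃ C > 0, ∀ lam ∈ Ioo 0 lam₀, ∀ ε ∈ Ioo 0 lam,
      IntegrableOn (fun s ↦ 1 / (|lam - s| * log (1 / s) ^ p))
          (Ioo 0 (lam - ε) ∪ Ioo (lam + ε) (η * lam)) ∧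
        ∫ s in Ioo 0 (lam - ε) ∪ Ioo (lam + ε) (η * lam), 1 / (|lam - s| * log (1 / s) ^ p)
          ≤ C * log (1 / ε) / log (1 / lam) ^ p := by
  obtain ⟨c, hc, hrpow⟩ := exists_forall_mul_le_rpow hη hlam₀
  refine ⟨2 / c ^ p, by positivity, fun lam hlam ε hε ↦ ?_⟩
  have hlam_lt : lam < 1 :=
    hlam.2.trans (hlam₀.2.trans_le (div_le_one_of_le₀ hη (by linarith)))
  have hη_lam : η * lam ≤ lam ^ c := hrpow lam ⟨hlam.1, hlam.2.le⟩
  have hlam_le : lam ≤ η * lam := le_mul_of_one_le_left hlam.1.le hη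
  refine integrableOn_and_setIntegral_one_div_abs_sub_mul_log_rpow_le
    ⟨hlam.1, hlam_lt⟩ ⟨hε.1, hε.2.trans hlam_lt⟩ hc hp
    (measurableSet_Ioo.union measurableSet_Ioo) ?_ ?_
  · rintro s (⟨hs, hs'⟩ | ⟨hs, hs'⟩) <;> constructor <;> linarith [hlam.1, hε.1]
  · rintro s (⟨-, hs⟩ | ⟨hs, -⟩) <;> rw [lt_abs]
    · left; linarith
    · right; linarith

/-- Let `η > 1`. Then there exist `C > 0` and `λ₀ ∈ (0, 1/η)` such that for every
`λ ∈ (0, λ₀)` and every `ε ∈ (0, λ/2)`,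
`∫_{(0,λ-ε) ∪ (λ+ε,ηλ)} ds / (|λ - s| (ln(1/s))^{3/2}) ≤ C ln(1/ε) / (ln(1/λ))^{3/2}`. -/
theorem stmt15 (η : ℝ) (hη : 1 < η) :
    ∃ C > (0 : ℝ), ∃ lam₀ ∈ Set.Ioo (0 : ℝ) (1 / η),
      ∀ lam ∈ Set.Ioo (0 : ℝ) lam₀, ∀ ε ∈ Set.Ioo (0 : ℝ) (lam / 2),
        ∫ s in Set.Ioo (0 : ℝ) (lam - ε) ∪ Set.Ioo (lam + ε) (η * lam),
            1 / (|lam - s| * (Real.log (1 / s)) ^ ((3 : ℝ) / 2))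
          ≤ C * Real.log (1 / ε) / (Real.log (1 / lam)) ^ ((3 : ℝ) / 2) := by
  obtain ⟨lam₀, hlam₀⟩ : (Ioo 0 (1 / η)).Nonempty := nonempty_Ioo.2 (by positivity)
  obtain ⟨C, hC, hbound⟩ := stmt15_general hη.le hlam₀ (p := 3 / 2) (by norm_num)
  exact ⟨C, hC, lam₀, hlam₀, fun lam hlam ε hε ↦
    (hbound lam hlam ε ⟨hε.1, by linarith [hε.1, hε.2]⟩).2⟩
end

section
/- Let 0 < s₀ < 1, C₁ > 0 and let g : (0, s₀) → ℝ be differentiable with |g'(s)| ≤ C₁ / (s (ln(1/s))^{1/2}) for all s ∈ (0, s₀). Then there exist C₂ > 0 and λ₀ ∈ (0, s₀/2) such that for every λ ∈ (0, λ₀) and every ε ∈ (0, λ/2), ∫_0^ε ( |g(λ+s) − g(λ−s)| / s ) · |g'(λ+s)| ds ≤ C₂ ε / (λ² ln(1/λ)). -/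
/-!
Every `t` in the window `(λ/2, 3λ/2)` satisfies `t² ≤ λ` once `λ ≤ 4/9`, so that
`log (1/t) ≥ log (1/λ) / 2`. Hence `|g'| ≤ M` on the window, where `M² = 8 C₁² / (λ² log (1/λ))`.
By the mean value inequality the symmetric quotient `|g (λ+s) - g (λ-s)| / s` is at most `2 M`, so
the integrand is at most `2 M²`, and the interval of integration has length `ε`.
-/

open MeasureTheory Real Set

section SymmetricQuotient

variable {E : Type*} [NormedAddCommGroup E] [NormedSpace ℝ E] {g g' : ℝ → E} {M x : ℝ}

theorem norm_symm_sub_div_mul_norm_deriv_le {K : Set ℝ} {s : ℝ} (hK : Convex ℝ K)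
    (hg : ∀ t ∈ K, HasDerivWithinAt g (g' t) K t) (hM : ∀ t ∈ K, ‖g' t‖ ≤ M) (hs : 0 < s)
    (hleft : x - s ∈ K) (hright : x + s ∈ K) :
    ‖g (x + s) - g (x - s)‖ / s * ‖g' (x + s)‖ ≤ 2 * M ^ 2 := by
  have hM₀ : 0 ≤ M := (norm_nonneg _).trans (hM _ hright)
  have hquot : ‖g (x + s) - g (x - s)‖ / s ≤ 2 * M := by
    rw [div_le_iff₀ hs]
    calc ‖g (x + s) - g (x - s)‖ ≤ M * ‖x + s - (x - s)‖ :=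
          hK.norm_image_sub_le_of_norm_hasDerivWithin_le hg hM hleft hright
      _ = 2 * M * s := by
          rw [add_sub_sub_cancel, Real.norm_of_nonneg (by positivity)]
          ring
  calc ‖g (x + s) - g (x - s)‖ / s * ‖g' (x + s)‖ ≤ 2 * M * M := by
        gcongr
        exact hM _ hright
    _ = 2 * M ^ 2 := by ring

theorem setIntegral_norm_symm_sub_div_mul_norm_deriv_le {r ε : ℝ}
    (hg : ∀ t ∈ Ioo (x - r) (x + r), HasDerivAt g (g' t) t)
    (hM : ∀ t ∈ Ioo (x - r) (x + r), ‖g' t‖ ≤ M) (hε : 0 ≤ ε) (hεr : ε ≤ r) :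
    ∫ s in Ioo 0 ε, ‖g (x + s) - g (x - s)‖ / s * ‖g' (x + s)‖ ≤ 2 * M ^ 2 * ε := by
  have hbound : ∀ s ∈ Ioo 0 ε,
      ‖‖g (x + s) - g (x - s)‖ / s * ‖g' (x + s)‖‖ ≤ 2 * M ^ 2 := by
    rintro s ⟨hs, hsε⟩
    rw [Real.norm_of_nonneg (by positivity)]
    exact norm_symm_sub_div_mul_norm_deriv_le (convex_Ioo _ _)
      (fun t ht ↦ (hg t ht).hasDerivWithinAt) hM hs
      ⟨by linarith, by linarith⟩ ⟨by linarith, by linarith⟩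
  have hint := norm_setIntegral_le_of_norm_le_const (μ := volume) (by simp) hbound
  rw [volume_real_Ioo_of_le hε, sub_zero] at hint
  exact (le_norm_self _).trans hint

end SymmetricQuotient

theorem half_log_one_div_le_log_one_div {t lam : ℝ} (ht : 0 < t) (htlam : t ^ 2 ≤ lam) :
    log (1 / lam) / 2 ≤ log (1 / t) := by
  have hlog : 2 * log t ≤ log lam := by
    simpa only [log_pow, Nat.cast_ofNat] using log_le_log (by positivity) htlam
  rw [one_div, one_div, log_inv, log_inv]
  linarith

theorem div_mul_sqrt_log_one_div_le {C a t lam : ℝ} (hC : 0 ≤ C) (ha : 0 < a) (hat : a ≤ t)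
    (htlam : t ^ 2 ≤ lam) (hlam : lam < 1) :
    C / (t * √(log (1 / t))) ≤ C / (a * √(log (1 / lam) / 2)) := by
  have ht : 0 < t := ha.trans_le hat
  have hlog : 0 < log (1 / lam) :=
    log_pos (one_lt_one_div ((by positivity : 0 < t ^ 2).trans_le htlam) hlam)
  have hhalf := half_log_one_div_le_log_one_div ht htlam
  gcongr

theorem stmt16_general {E : Type*} [NormedAddCommGroup E] [NormedSpace ℝ E] {s₀ C₁ : ℝ}
    (hs₀ : s₀ < 1) (hC₁ : 0 ≤ C₁) {g g' : ℝ → E}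
    (hg : ∀ s ∈ Ioo 0 s₀, HasDerivAt g (g' s) s)
    (hg' : ∀ s ∈ Ioo 0 s₀, ‖g' s‖ ≤ C₁ / (s * √(log (1 / s))))
    {lam ε : ℝ} (hlam : 0 < lam) (hlam' : lam ≤ 4 / 9 * s₀) (hε : 0 ≤ ε) (hε' : ε ≤ lam / 2) :
    ∫ s in Ioo 0 ε, ‖g (lam + s) - g (lam - s)‖ / s * ‖g' (lam + s)‖
      ≤ 16 * C₁ ^ 2 * ε / (lam ^ 2 * log (1 / lam)) := by
  have hlog : 0 < log (1 / lam) := log_pos (one_lt_one_div hlam (by linarith))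
  have hwindow : Ioo (lam - lam / 2) (lam + lam / 2) ⊆ Ioo 0 s₀ :=
    Ioo_subset_Ioo (by linarith) (by linarith)
  have hderiv : ∀ t ∈ Ioo (lam - lam / 2) (lam + lam / 2),
      ‖g' t‖ ≤ C₁ / (lam / 2 * √(log (1 / lam) / 2)) := by
    intro t ht
    have hsq : t ^ 2 ≤ lam := by nlinarith [ht.1, ht.2]
    exact (hg' t (hwindow ht)).trans <|
      div_mul_sqrt_log_one_div_le hC₁ (by positivity) (by linarith [ht.1]) hsq (by linarith)
  calc ∫ s in Ioo 0 ε, ‖g (lam + s) - g (lam - s)‖ / s * ‖g' (lam + s)‖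
      ≤ 2 * (C₁ / (lam / 2 * √(log (1 / lam) / 2))) ^ 2 * ε :=
        setIntegral_norm_symm_sub_div_mul_norm_deriv_le (fun t ht ↦ hg t (hwindow ht))
          hderiv hε hε'
    _ = 16 * C₁ ^ 2 * ε / (lam ^ 2 * log (1 / lam)) := by
        rw [div_pow, mul_pow, sq_sqrt (by positivity)]
        field_simp
        ring

/-- Let `0 < s₀ < 1`, `C₁ > 0` and let `g : (0,s₀) → ℝ` be differentiable with
`|g'(s)| ≤ C₁ / (s (ln(1/s))^{1/2})` for all `s ∈ (0,s₀)`. Then there exist `C₂ > 0` and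
`λ₀ ∈ (0, s₀/2)` such that for every `λ ∈ (0, λ₀)` and every `ε ∈ (0, λ/2)`,
`∫_0^ε (|g(λ+s) - g(λ-s)| / s) |g'(λ+s)| ds ≤ C₂ ε / (λ² ln(1/λ))`. -/
theorem stmt16 (s₀ C₁ : ℝ) (hs₀ : 0 < s₀) (hs₀' : s₀ < 1) (hC₁ : 0 < C₁)
    (g g' : ℝ → ℝ)
    (hg : ∀ s ∈ Set.Ioo (0 : ℝ) s₀, HasDerivAt g (g' s) s)
    (hg' : ∀ s ∈ Set.Ioo (0 : ℝ) s₀,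
      |g' s| ≤ C₁ / (s * Real.sqrt (Real.log (1 / s)))) :
    ∃ C₂ > (0 : ℝ), ∃ lam₀ ∈ Set.Ioo (0 : ℝ) (s₀ / 2),
      ∀ lam ∈ Set.Ioo (0 : ℝ) lam₀, ∀ ε ∈ Set.Ioo (0 : ℝ) (lam / 2),
        ∫ s in Set.Ioo (0 : ℝ) ε,
            (|g (lam + s) - g (lam - s)| / s) * |g' (lam + s)|
          ≤ C₂ * ε / (lam ^ 2 * Real.log (1 / lam)) :=
  ⟨16 * C₁ ^ 2, by positivity, 4 / 9 * s₀, ⟨by positivity, by linarith⟩, fun _ hlam _ hε ↦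
    stmt16_general hs₀' hC₁.le hg hg' hlam.1 hlam.2.le hε.1.le hε.2.le⟩
end

section
/- Let m > 0 and let ω : S¹ → ℝ be a continuous function with min ω =: ε₀ > 0, where S¹ is the unit circle in ℝ². Let V : ℝ² → [0, ∞) be measurable and suppose that sup_{|(x,y)| ≥ R} | (1 + x² + y²)^{m/2} V(x,y) − ω((x,y)/|(x,y)|) | → 0 as R → ∞. Then there exist λ₀ > 0 and constants c₋, c₊ > 0 such that for every λ ∈ (0, λ₀), c₋ λ^{−2/m} ≤ vol{(x,y) ∈ ℝ² : V(x,y) > λ} ≤ c₊ λ^{−2/m}. In particular the volume function satisfies N(λ, V) ≍ λ^{−2/m} as λ ↓ 0. -/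
open MeasureTheory Real Set

/-!
The profile `ω` is bounded between two positive constants, so the hypothesis on `V` only matters
through the two-sided bound `V x ≍ ‖x‖ ^ (-m)` at infinity, in which the choice of norm is
immaterial. As `λ < C * ‖x‖ ^ (-m)` means `‖x‖ < (C / λ) ^ m⁻¹`, the upper bound puts `{V > λ}`
inside a ball whose radius is of order `λ ^ (-1 / m)`, and the lower bound puts a ball with radius
of the same order, taken away from the origin, inside `{V > λ}`.
-/

open Asymptotics Bornology Filter Metric Module Topology

section Superlevel

variable {m : ℝ}

lemma lt_mul_rpow_neg_iff {C lam t : ℝ} (hm : 0 < m) (hC : 0 < C) (hlam : 0 < lam) (ht : 0 < t) :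
    lam < C * t ^ (-m) ↔ t < (C / lam) ^ m⁻¹ := by
  rw [lt_rpow_inv_iff_of_pos ht.le (div_pos hC hlam).le hm, rpow_neg ht.le, ← div_eq_mul_inv,
    lt_div_comm₀ hlam (rpow_pos_of_pos ht m)]

lemma div_rpow_inv_pow {C lam : ℝ} (hC : 0 ≤ C) (hlam : 0 ≤ lam) (d : ℕ) :
    ((C / lam) ^ m⁻¹) ^ d = C ^ (d / m) * lam ^ (-(d / m)) := by
  rw [← rpow_mul_natCast (div_nonneg hC hlam), inv_mul_eq_div, div_rpow hC hlam, rpow_neg hlam,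
    div_eq_mul_inv]

lemma tendsto_div_rpow_inv_nhdsGT_zero {C : ℝ} (hm : 0 < m) (hC : 0 < C) :
    Tendsto (fun lam : ℝ ↦ (C / lam) ^ m⁻¹) (𝓝[>] 0) atTop :=
  (tendsto_rpow_atTop (inv_pos.2 hm)).comp (tendsto_inv_nhdsGT_zero.const_mul_atTop hC)

variable {E : Type*} [NormedAddCommGroup E] [NormedSpace ℝ E] {V : E → ℝ}

lemma exists_ball_subset_annulus [Nontrivial E] {r : ℝ} (hr : 0 ≤ r) :
    ∃ v : E, ball v (r / 3) ⊆ {x | r / 3 < ‖x‖ ∧ ‖x‖ < r} := by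
  obtain ⟨v, hv⟩ := exists_norm_eq E (show 0 ≤ 2 * r / 3 by positivity)
  refine ⟨v, fun x hx ↦ ?_⟩
  have hxv := abs_lt.1 ((abs_norm_sub_norm_le x v).trans_lt (mem_ball_iff_norm.1 hx))
  constructor <;> linarith

variable [MeasurableSpace E] [FiniteDimensional ℝ E] (μ : Measure E) [μ.IsAddHaarMeasure]

lemma measureReal_unitBall_pos : 0 < μ.real (ball (0 : E) 1) :=
  ENNReal.toReal_pos (measure_ball_pos μ 0 one_pos).ne' measure_ball_lt_top.ne

variable [BorelSpace E]

lemma addHaar_ball_eq_ofReal (x : E) {r : ℝ} (hr : 0 < r) :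
    μ (ball x r) = ENNReal.ofReal (μ.real (ball 0 1) * r ^ finrank ℝ E) := by
  rw [Measure.addHaar_ball_of_pos μ x hr, mul_comm, ENNReal.ofReal_mul measureReal_nonneg,
    ofReal_measureReal measure_ball_lt_top.ne]

lemma exists_measure_superlevel_le (hm : 0 < m) (hV : V =O[cobounded E] fun x ↦ ‖x‖ ^ (-m)) :
    ∃ c > 0, ∀ᶠ lam in 𝓝[>] 0,
      μ {x | lam < V x} ≤ ENNReal.ofReal (c * lam ^ (-(finrank ℝ E / m))) := by
  obtain ⟨C, hC, hVC⟩ := hV.exists_pos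
  obtain ⟨R, -, hR⟩ := (hasBasis_cobounded_norm.eventually_iff).1 hVC.bound
  refine ⟨μ.real (ball 0 1) * C ^ (finrank ℝ E / m),
    mul_pos (measureReal_unitBall_pos μ) (rpow_pos_of_pos hC _), ?_⟩
  filter_upwards [self_mem_nhdsWithin,
    (tendsto_div_rpow_inv_nhdsGT_zero hm hC).eventually_ge_atTop R] with lam hlam hRlam
  have hr : 0 < (C / lam) ^ m⁻¹ := rpow_pos_of_pos (div_pos hC hlam) _
  have hsub : {x | lam < V x} ⊆ ball 0 ((C / lam) ^ m⁻¹) := by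
    intro x hx
    by_contra hxr
    rw [mem_ball_zero_iff, not_lt] at hxr
    have hVx : V x ≤ C * ‖x‖ ^ (-m) := by
      simpa only [norm_of_nonneg (rpow_nonneg (norm_nonneg x) (-m))]
        using (le_norm_self _).trans (hR (hRlam.trans hxr))
    exact hxr.not_gt
      ((lt_mul_rpow_neg_iff hm hC hlam (hr.trans_le hxr)).1 (lt_of_lt_of_le hx hVx))
  refine (measure_mono hsub).trans_eq ?_
  rw [addHaar_ball_eq_ofReal μ 0 hr, div_rpow_inv_pow hC.le (le_of_lt hlam), mul_assoc]

lemma exists_le_measure_superlevel [Nontrivial E] (hm : 0 < m)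
    (hV0 : ∀ᶠ x in cobounded E, 0 ≤ V x) (hV : (fun x ↦ ‖x‖ ^ (-m)) =O[cobounded E] V) :
    ∃ c > 0, ∀ᶠ lam in 𝓝[>] 0,
      ENNReal.ofReal (c * lam ^ (-(finrank ℝ E / m))) ≤ μ {x | lam < V x} := by
  obtain ⟨c, hc, hcV⟩ := isBigO_iff''.1 hV
  obtain ⟨R, -, hR⟩ := (hasBasis_cobounded_norm.eventually_iff).1 (hcV.and hV0)
  refine ⟨μ.real (ball 0 1) * (c ^ (finrank ℝ E / m) / 3 ^ finrank ℝ E),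
    mul_pos (measureReal_unitBall_pos μ) (by positivity), ?_⟩
  filter_upwards [self_mem_nhdsWithin,
    (tendsto_div_rpow_inv_nhdsGT_zero hm hc).eventually_ge_atTop (3 * R)] with lam hlam hRlam
  have hr : 0 < (c / lam) ^ m⁻¹ := rpow_pos_of_pos (div_pos hc hlam) _
  obtain ⟨v, hv⟩ := exists_ball_subset_annulus (E := E) hr.le
  have hsub : ball v ((c / lam) ^ m⁻¹ / 3) ⊆ {x | lam < V x} := by
    intro x hx
    obtain ⟨hrx, hxr⟩ := hv hx
    have hcVx : c * ‖x‖ ^ (-m) ≤ V x := by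
      obtain ⟨hbound, hVx⟩ := hR (show R ≤ ‖x‖ by linarith)
      simpa only [norm_of_nonneg (rpow_nonneg (norm_nonneg x) (-m)), norm_of_nonneg hVx]
        using hbound
    exact ((lt_mul_rpow_neg_iff hm hc hlam (by linarith)).2 hxr).trans_le hcVx
  refine Eq.trans_le ?_ (measure_mono hsub)
  rw [addHaar_ball_eq_ofReal μ v (by positivity), div_pow, div_rpow_inv_pow hc.le (le_of_lt hlam)]
  congr 1
  ring

theorem stmt18_general [Nontrivial E] (hm : 0 < m) (hV0 : ∀ᶠ x in cobounded E, 0 ≤ V x)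
    (hV : V =Θ[cobounded E] fun x ↦ ‖x‖ ^ (-m)) :
    ∃ lam₀ > (0 : ℝ), ∃ cm > (0 : ℝ), ∃ cp > (0 : ℝ), ∀ lam ∈ Ioo 0 lam₀,
      ENNReal.ofReal (cm * lam ^ (-(finrank ℝ E / m))) ≤ μ {x | lam < V x} ∧
      μ {x | lam < V x} ≤ ENNReal.ofReal (cp * lam ^ (-(finrank ℝ E / m))) := by
  obtain ⟨cm, hcm, hlower⟩ := exists_le_measure_superlevel μ hm hV0 hV.2
  obtain ⟨cp, hcp, hupper⟩ := exists_measure_superlevel_le μ hm hV.1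
  obtain ⟨lam₀, hlam₀, hsub⟩ := mem_nhdsGT_iff_exists_Ioo_subset.1 (hlower.and hupper)
  exact ⟨lam₀, hlam₀, cm, hcm, cp, hcp, hsub⟩

end Superlevel

section Profile

lemma isTheta_one_of_eventually_mem_Icc {α : Type*} {l : Filter α} {f : α → ℝ} {a b : ℝ}
    (ha : 0 < a) (hf : ∀ᶠ x in l, f x ∈ Icc a b) : f =Θ[l] (1 : α → ℝ) := by
  constructor
  · refine .of_bound b (hf.mono fun x hx ↦ ?_)
    simpa [abs_of_nonneg (ha.le.trans hx.1)] using hx.2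
  · refine .of_bound a⁻¹ (hf.mono fun x hx ↦ ?_)
    simpa [abs_of_nonneg (ha.le.trans hx.1), ← div_eq_inv_mul, one_le_div ha] using hx.1

lemma isTheta_inv_of_abs_mul_sub_le {α : Type*} {l : Filter α} {f V u : α → ℝ} {ε δ M : ℝ}
    (hδ : δ < ε) (hu : ∀ᶠ x in l, u x ∈ Icc ε M) (h : ∀ᶠ x in l, |f x * V x - u x| ≤ δ) :
    V =Θ[l] f⁻¹ := by
  have hfV : ∀ᶠ x in l, f x * V x ∈ Icc (ε - δ) (M + δ) := by
    filter_upwards [hu, h] with x hux hx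
    have := abs_le.1 hx
    constructor <;> linarith [hux.1, hux.2]
  have hV : V =ᶠ[l] fun x ↦ (f x)⁻¹ * (f x * V x) := by
    filter_upwards [hfV] with x hx
    have hfx : f x ≠ 0 := left_ne_zero_of_mul ((sub_pos.2 hδ).trans_le hx.1).ne'
    rw [inv_mul_cancel_left₀ hfx]
  rw [← mul_one f⁻¹]
  exact hV.trans_isTheta
    ((isTheta_refl f⁻¹ l).mul (isTheta_one_of_eventually_mem_Icc (sub_pos.2 hδ) hfV))

lemma isTheta_one_add_norm_sq_add_norm_sq (E F : Type*) [SeminormedAddCommGroup E]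
    [SeminormedAddCommGroup F] :
    (fun p : E × F ↦ 1 + ‖p.1‖ ^ 2 + ‖p.2‖ ^ 2) =Θ[cobounded (E × F)] fun p ↦ ‖p‖ ^ 2 := by
  constructor
  · refine .of_bound 3 ((eventually_cobounded_le_norm 1).mono fun p hp ↦ ?_)
    have h₁ : ‖p.1‖ ^ 2 ≤ ‖p‖ ^ 2 := by gcongr; exact norm_fst_le p
    have h₂ : ‖p.2‖ ^ 2 ≤ ‖p‖ ^ 2 := by gcongr; exact norm_snd_le p
    rw [norm_of_nonneg (by positivity), norm_of_nonneg (by positivity)]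
    linarith [one_le_pow₀ hp (n := 2)]
  · refine .of_norm_le fun p ↦ ?_
    rw [norm_of_nonneg (by positivity)]
    rcases max_choice ‖p.1‖ ‖p.2‖ with h | h <;> rw [Prod.norm_def, h] <;>
      linarith [sq_nonneg ‖p.1‖, sq_nonneg ‖p.2‖]

lemma isTheta_one_add_sq_add_sq_rpow (m : ℝ) :
    (fun p : ℝ × ℝ ↦ (1 + p.1 ^ 2 + p.2 ^ 2) ^ (m / 2)) =Θ[cobounded (ℝ × ℝ)]
      fun p ↦ ‖p‖ ^ m := by
  have hsq : (fun p : ℝ × ℝ ↦ 1 + p.1 ^ 2 + p.2 ^ 2) =Θ[cobounded (ℝ × ℝ)]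
      fun p ↦ ‖p‖ ^ 2 := by
    simpa only [norm_eq_abs, sq_abs] using isTheta_one_add_norm_sq_add_norm_sq ℝ ℝ
  have hrpow (p : ℝ × ℝ) : ‖p‖ ^ m = (‖p‖ ^ 2) ^ (m / 2) := by
    rw [← rpow_natCast_mul (norm_nonneg p), Nat.cast_ofNat, mul_div_cancel₀ m two_ne_zero]
  simp only [hrpow]
  exact hsq.rpow (.of_forall fun p ↦ by positivity) (.of_forall fun p ↦ by positivity)

lemma norm_le_sqrt_sq_add_sq (p : ℝ × ℝ) : ‖p‖ ≤ √(p.1 ^ 2 + p.2 ^ 2) :=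
  max_le (abs_le_sqrt (le_add_of_nonneg_right (sq_nonneg _)))
    (abs_le_sqrt (le_add_of_nonneg_left (sq_nonneg _)))

lemma div_sqrt_sq_add_div_sqrt_sq {x y : ℝ} (h : 0 < √(x ^ 2 + y ^ 2)) :
    (x / √(x ^ 2 + y ^ 2)) ^ 2 + (y / √(x ^ 2 + y ^ 2)) ^ 2 = 1 := by
  rw [div_pow, div_pow, ← add_div, sq_sqrt (by positivity), div_self (sqrt_pos.1 h).ne']

lemma isCompact_unitCircle : IsCompact {p : ℝ × ℝ | p.1 ^ 2 + p.2 ^ 2 = 1} := by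
  refine (isCompact_closedBall 0 1).of_isClosed_subset
    (isClosed_eq (by fun_prop) continuous_const) fun p hp ↦ ?_
  rw [mem_closedBall_zero_iff, ← sqrt_one, ← show _ = (1 : ℝ) from hp]
  exact norm_le_sqrt_sq_add_sq p

lemma isTheta_norm_rpow_neg_of_profile {m ε δ R : ℝ} {ω V : ℝ × ℝ → ℝ} (hδ : δ < ε)
    (hωmin : ∀ p : ℝ × ℝ, p.1 ^ 2 + p.2 ^ 2 = 1 → ε ≤ ω p)
    (hωbdd : BddAbove (ω '' {p : ℝ × ℝ | p.1 ^ 2 + p.2 ^ 2 = 1}))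
    (hV : ∀ p : ℝ × ℝ, R ≤ √(p.1 ^ 2 + p.2 ^ 2) →
      |(1 + p.1 ^ 2 + p.2 ^ 2) ^ (m / 2) * V p -
          ω (p.1 / √(p.1 ^ 2 + p.2 ^ 2), p.2 / √(p.1 ^ 2 + p.2 ^ 2))| ≤ δ) :
    V =Θ[cobounded (ℝ × ℝ)] fun p ↦ ‖p‖ ^ (-m) := by
  obtain ⟨M, hM⟩ := hωbdd
  have hω : ∀ᶠ p : ℝ × ℝ in cobounded (ℝ × ℝ),
      ω (p.1 / √(p.1 ^ 2 + p.2 ^ 2), p.2 / √(p.1 ^ 2 + p.2 ^ 2)) ∈ Icc ε M := by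
    filter_upwards [eventually_cobounded_le_norm 1] with p hp
    have hdir := div_sqrt_sq_add_div_sqrt_sq
      (one_pos.trans_le (hp.trans (norm_le_sqrt_sq_add_sq p)))
    exact ⟨hωmin _ hdir, hM (mem_image_of_mem ω hdir)⟩
  have hVω := (eventually_cobounded_le_norm R).mono fun p hp ↦
    hV p (hp.trans (norm_le_sqrt_sq_add_sq p))
  simp only [rpow_neg (norm_nonneg _)]
  exact (isTheta_inv_of_abs_mul_sub_le hδ hω hVω).trans
    (isTheta_one_add_sq_add_sq_rpow m).inv

end Profile

/-- Let `m > 0` and `ω : S¹ → ℝ` continuous with `min ω =: ε₀ > 0`. Let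
`V : ℝ² → [0,∞)` be measurable with
`sup_{|(x,y)| ≥ R} |(1 + x² + y²)^{m/2} V(x,y) - ω((x,y)/|(x,y)|)| → 0` as `R → ∞`. Then
there are `λ₀ > 0` and `c₋, c₊ > 0` such that for every `λ ∈ (0, λ₀)`,
`c₋ λ^{-2/m} ≤ vol{V > λ} ≤ c₊ λ^{-2/m}`; that is, `N(λ,V) ≍ λ^{-2/m}` as `λ ↓ 0`. -/
theorem stmt18 (m ε₀ : ℝ) (hm : 0 < m) (hε₀ : 0 < ε₀)
    (ω : ℝ × ℝ → ℝ)
    (hωc : ContinuousOn ω {p : ℝ × ℝ | p.1 ^ 2 + p.2 ^ 2 = 1})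
    (hωmin : ∀ p : ℝ × ℝ, p.1 ^ 2 + p.2 ^ 2 = 1 → ε₀ ≤ ω p)
    (hωatt : ∃ p : ℝ × ℝ, p.1 ^ 2 + p.2 ^ 2 = 1 ∧ ω p = ε₀)
    (V : ℝ × ℝ → ℝ) (hVm : Measurable V) (hV0 : ∀ p, 0 ≤ V p)
    (hlim : ∀ δ > (0 : ℝ), ∃ R > (0 : ℝ), ∀ p : ℝ × ℝ,
      R ≤ Real.sqrt (p.1 ^ 2 + p.2 ^ 2) →
      |(1 + p.1 ^ 2 + p.2 ^ 2) ^ (m / 2) * V p -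
          ω (p.1 / Real.sqrt (p.1 ^ 2 + p.2 ^ 2), p.2 / Real.sqrt (p.1 ^ 2 + p.2 ^ 2))|
        ≤ δ) :
    ∃ lam₀ > (0 : ℝ), ∃ cm > (0 : ℝ), ∃ cp > (0 : ℝ),
      ∀ lam ∈ Set.Ioo (0 : ℝ) lam₀,
        ENNReal.ofReal (cm * lam ^ (-(2 / m))) ≤ volume {p : ℝ × ℝ | lam < V p} ∧
        volume {p : ℝ × ℝ | lam < V p} ≤ ENNReal.ofReal (cp * lam ^ (-(2 / m))) := by
  obtain ⟨R, -, hR⟩ := hlim (ε₀ / 2) (half_pos hε₀)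
  simpa using stmt18_general volume hm (.of_forall hV0) (isTheta_norm_rpow_neg_of_profile
    (half_lt_self hε₀) hωmin (isCompact_unitCircle.bddAbove_image hωc) hR)
end
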